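/- Fix a positive integer n. Then there are only finitely many convex lattice polytopes in ℝ² containing exactly n lattice points, up to affine unimodular equivalence: there exists a finite collection 𝒮 of convex lattice polytopes such that every convex lattice polytope P ⊂ ℝ² with exactly n points of ℤ² lying in P is equal to f(P') for some P' ∈ 𝒮 and some map f : ℝ² → ℝ² of the form f(x) = Ax + b with A ∈ GL₂(ℤ) and b ∈ ℤ². -/

import Mathlib

/-- The coercion of an integer lattice point of `ℤ²` to `ℝ²`. -/
def toR2 (v : Fin 2 → ℤ) : Fin 2 → ℝ := fun i => (v i : ℝ)

/-- A convex lattice polytope in `ℝ²`: the convex hull of a nonempty finite set of points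
of `ℤ²`. -/
def IsConvexLatticePolytope (P : Set (Fin 2 → ℝ)) : Prop :=
  ∃ S : Finset (Fin 2 → ℤ), S.Nonempty ∧ P = convexHull ℝ (toR2 '' (S : Set (Fin 2 → ℤ)))

/-- The affine map `ℝ² → ℝ²` given by `x ↦ A x + b`, for an integer matrix `A` and an
integer vector `b`. -/
def unimodMap (A : Matrix (Fin 2) (Fin 2) ℤ) (b : Fin 2 → ℤ) (x : Fin 2 → ℝ) : Fin 2 → ℝ :=
  (A.map (Int.cast : ℤ → ℝ)).mulVec x + toR2 b

/-!
Let `L` be the set of lattice points of a convex set. If `a`, `a + u` and `a + xu + yv` lie in `L`,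
then for every `j` between `0` and `y` the set `L` meets the row of height `j` or that of height
`y - j`: a suitable lattice point of height `j` in the parallelogram spanned by the edges at `a`,
or its reflection in the centre, falls into the triangle. Hence `|y| < 2 |L|`, and taking `j = ±1`
one descends from any `y ≠ 0` to a point of height `±1`. So unless `L` is collinear it contains a
triangle `a`, `a + u`, `a + v` with `(u, v)` a basis of the lattice. The coordinates of a point of
`L` in that basis, with origin `a`, are its heights over two edges, so they are less than `2 |L|`
in absolute value. Collinear sets are covered by the same bound with `u = 0`.
-/

section Convex

variable {𝕜 E : Type*} [Field 𝕜] [LinearOrder 𝕜] [IsStrictOrderedRing 𝕜] [AddCommGroup E]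
  [Module 𝕜 E] {P : Set E} {a u v : E}

lemma mem_of_sum_zsmul_eq {ι : Type*} {t : Finset ι} {w : ι → ℤ} {z : ι → E} {q : E}
    (hP : Convex 𝕜 P) (hw : ∀ i ∈ t, 0 ≤ w i) (hpos : 0 < ∑ i ∈ t, w i) (hz : ∀ i ∈ t, z i ∈ P)
    (hq : (∑ i ∈ t, w i) • q = ∑ i ∈ t, w i • z i) : q ∈ P := by
  have hpos' : (0 : 𝕜) < ∑ i ∈ t, (w i : 𝕜) := by exact_mod_cast hpos
  have hcenter : t.centerMass (fun i => (w i : 𝕜)) z = q := by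
    simp only [Finset.centerMass, Int.cast_smul_eq_zsmul, ← hq]
    rw [← Int.cast_smul_eq_zsmul 𝕜, smul_smul, Int.cast_sum, inv_mul_cancel₀ hpos'.ne', one_smul]
  exact hcenter ▸ hP.centerMass_mem (fun i hi => Int.cast_nonneg (hw i hi)) hpos' hz

lemma add_mem_of_add_zsmul_mem {g : ℤ} (hP : Convex 𝕜 P) (ha : a ∈ P) (hg : 0 < g)
    (hag : a + g • u ∈ P) : a + u ∈ P := by
  have hg' : (1 : 𝕜) ≤ g := by exact_mod_cast hg
  have := hP.add_smul_mem ha hag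
    ⟨inv_nonneg.2 (zero_le_one.trans hg'), inv_le_one_of_one_le₀ hg'⟩
  rwa [← Int.cast_smul_eq_zsmul 𝕜, inv_smul_smul₀ (zero_lt_one.trans_le hg').ne'] at this

/-- The set of heights `y` at which `P` meets the planar lattice `a + ℤu + ℤv`, the points of the
row of height `y` being `a + xu + yv`. -/
def heights (P : Set E) (a u v : E) : Set ℤ :=
  {y | ∃ x : ℤ, a + (x • u + y • v) ∈ P}

lemma mem_heights_neg {y : ℤ} : y ∈ heights P a u (-v) ↔ -y ∈ heights P a u v := by
  simp only [heights, Set.mem_ofPred_eq, smul_neg, neg_smul]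

lemma mem_heights_or_sub_mem_of_le {y j : ℤ} (hP : Convex 𝕜 P) (ha : a ∈ P) (hau : a + u ∈ P)
    (hy : y ∈ heights P a u v) (hy0 : 0 < y) (hj : 0 ≤ j) (hjy : j ≤ y) :
    j ∈ heights P a u v ∨ y - j ∈ heights P a u v := by
  obtain ⟨x, hx⟩ := hy
  have mem_of_weights (α β γ : ℤ) (hα : 0 ≤ α) (hβ : 0 ≤ β) (hγ : 0 ≤ γ) (hsum : α + β + γ = y)
      (q : E) (hq : y • q = α • a + β • (a + u) + γ • (a + (x • u + y • v))) : q ∈ P :=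
    mem_of_sum_zsmul_eq (t := Finset.univ) (w := ![α, β, γ])
      (z := ![a, a + u, a + (x • u + y • v)]) hP
      (by simp [Fin.forall_fin_succ, hα, hβ, hγ])
      (by simpa [Fin.sum_univ_three, hsum] using hy0)
      (by simp [Fin.forall_fin_succ, ha, hau, hx])
      (by simpa [Fin.sum_univ_three, hsum] using hq)
  -- `r / y` and `j / y` are the barycentric coordinates of `a + iu + jv` at the second and the
  -- third vertex.
  set r := -(j * x) % y
  set i := -(-(j * x) / y)
  have hr : i * y - j * x = r := by
    linear_combination -Int.emod_add_mul_ediv (-(j * x)) y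
  have hr0 : 0 ≤ r := Int.emod_nonneg _ hy0.ne'
  have hry : r < y := Int.emod_lt_of_pos _ hy0
  rcases le_total (r + j) y with hle | hle
  · refine .inl ⟨i, mem_of_weights (y - r - j) r j (by lia) hr0 hj (by ring) _ ?_⟩
    rw [← hr]
    module
  · refine .inr ⟨x - i + 1, mem_of_weights (r + j - y) (y - r) (y - j) (by lia) (by lia) (by lia)
      (by ring) _ ?_⟩
    rw [← hr]
    module

lemma mem_heights_or_sub_mem {y j : ℤ} (hP : Convex 𝕜 P) (ha : a ∈ P) (hau : a + u ∈ P)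
    (hy : y ∈ heights P a u v) (hj : j ∈ Finset.uIcc 0 y) :
    j ∈ heights P a u v ∨ y - j ∈ heights P a u v := by
  rw [Finset.mem_uIcc, inf_le_iff, le_sup_iff] at hj
  rcases lt_trichotomy y 0 with hneg | rfl | hpos
  · have := mem_heights_or_sub_mem_of_le (v := -v) (y := -y) (j := -j) hP ha hau
      (mem_heights_neg.2 (by rwa [neg_neg])) (by lia) (by lia) (by lia)
    simpa only [mem_heights_neg, neg_neg, neg_sub, sub_neg_eq_add, neg_add_rev, add_comm,
      ← sub_eq_add_neg] using this
  · obtain rfl : j = 0 := by lia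
    exact .inl hy
  · exact mem_heights_or_sub_mem_of_le hP ha hau hy hpos (by lia) (by lia)

lemma exists_isUnit_mem_heights {y : ℤ} (hP : Convex 𝕜 P) (ha : a ∈ P) (hau : a + u ∈ P)
    (hy : y ∈ heights P a u v) (hy0 : y ≠ 0) : ∃ ε ∈ heights P a u v, IsUnit ε := by
  induction hk : y.natAbs using Nat.strong_induction_on generalizing y with
  | _ k ih =>
    obtain ⟨ε, hε, hεy, hlt⟩ : ∃ ε : ℤ, IsUnit ε ∧ ε ∈ Finset.uIcc 0 y ∧ (y - ε).natAbs < k := by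
      rcases hy0.lt_or_gt with hneg | hpos
      · exact ⟨-1, isUnit_one.neg, by rw [Finset.uIcc_of_ge hneg.le, Finset.mem_Icc]; lia, by lia⟩
      · exact ⟨1, isUnit_one, by rw [Finset.uIcc_of_le hpos.le, Finset.mem_Icc]; lia, by lia⟩
    rcases mem_heights_or_sub_mem hP ha hau hy hεy with h | h
    · exact ⟨ε, h, hε⟩
    · by_cases hyε : y = ε
      · exact ⟨y, hy, hyε ▸ hε⟩
      · exact ih _ hlt h (sub_ne_zero.2 hyε) rfl

end Convex

lemma abs_lt_two_mul_ncard {H : Set ℤ} {y : ℤ} (hH : H.Finite)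
    (h : ∀ j ∈ Finset.uIcc 0 y, j ∈ H ∨ y - j ∈ H) : |y| < 2 * H.ncard := by
  lift H to Finset ℤ using hH
  have hsub : Finset.uIcc 0 y ⊆ H ∪ H.image (y - ·) := fun j hj => by
    rcases h j hj with hmem | hmem
    · exact Finset.mem_union_left _ hmem
    · exact Finset.mem_union_right _ (Finset.mem_image.2 ⟨y - j, hmem, sub_sub_cancel y j⟩)
  have hcard := (Finset.card_le_card hsub).trans
    ((Finset.card_union_le _ _).trans (Nat.add_le_add_left Finset.card_image_le _))
  rw [Int.card_uIcc] at hcard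
  rw [Set.ncard_coe_finset, Int.abs_eq_natAbs]
  lia

lemma exists_basis_coe_eq {R M ι : Type*} [CommRing R] [AddCommGroup M] [Module R M] [Fintype ι]
    [DecidableEq ι] (e : Module.Basis ι R M) {w : ι → M} (hw : IsUnit (e.det w)) :
    ∃ B : Module.Basis ι R M, ⇑B = w :=
  have ⟨hli, hspan⟩ := (Module.Basis.is_basis_iff_det e).2 hw
  ⟨.mk hli hspan.ge, Module.Basis.coe_mk _ _⟩

lemma exists_basis_smul_eq {M : Type*} [AddCommGroup M] (e : Module.Basis (Fin 2) ℤ M) {w : M}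
    (hw : w ≠ 0) : ∃ (B : Module.Basis (Fin 2) ℤ M) (g : ℤ), 0 < g ∧ g • B 0 = w := by
  have hgcd : 0 < Int.gcd (e.repr w 0) (e.repr w 1) := by
    rw [Int.gcd_pos_iff]
    by_contra! h
    exact hw (e.ext_elem fun i => by fin_cases i <;> simp [h])
  obtain ⟨g, m, n, hg, hmn, hm, hn⟩ := Int.exists_gcd_one' hgcd
  obtain ⟨s, t, hst⟩ := Int.isCoprime_iff_gcd_eq_one.2 hmn
  obtain ⟨B, hB⟩ := exists_basis_coe_eq e (w := ![m • e 0 + n • e 1, -t • e 0 + s • e 1]) (by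
    have hdet : m * s + t * n = 1 := by rw [mul_comm m, hst]
    simp [Module.Basis.det_apply, Matrix.det_fin_two, Module.Basis.toMatrix_apply, hdet])
  refine ⟨B, g, by exact_mod_cast hg, ?_⟩
  rw [hB, ← e.sum_repr w, Fin.sum_univ_two, hm, hn, Matrix.cons_val_zero]
  module

lemma repr_smul_add_repr_smul {R M : Type*} [Semiring R] [AddCommMonoid M] [Module R M]
    (B : Module.Basis (Fin 2) R M) (w : M) : B.repr w 0 • B 0 + B.repr w 1 • B 1 = w := by
  rw [← Fin.sum_univ_two fun i => B.repr w i • B i, B.sum_repr]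

section Lattice

variable {𝕜 E M : Type*} [Field 𝕜] [LinearOrder 𝕜] [IsStrictOrderedRing 𝕜] [AddCommGroup E]
  [Module 𝕜 E] {P : Set E} [AddCommGroup M] {φ : M →+ E}

lemma mem_heights_map {a u v : M} {y : ℤ} :
    y ∈ heights P (φ a) (φ u) (φ v) ↔ ∃ x : ℤ, φ (a + (x • u + y • v)) ∈ P := by
  simp only [heights, Set.mem_ofPred_eq, map_add, map_zsmul]

lemma abs_coord_lt_two_mul_ncard {a u v q : M} (f : M →+ ℤ) (hP : Convex 𝕜 P)
    (hfin : (φ ⁻¹' P).Finite) (hfu : f u = 0) (hfv : f v = 1) (ha : φ a ∈ P)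
    (hau : φ (a + u) ∈ P) (hq : φ q ∈ P) {x : ℤ} (hqa : x • u + f (q - a) • v = q - a) :
    |f (q - a)| < 2 * (φ ⁻¹' P).ncard := by
  set H := heights P (φ a) (φ u) (φ v)
  have hsub : H ⊆ (fun p => f (p - a)) '' (φ ⁻¹' P) := fun y hy => by
    obtain ⟨k, hk⟩ := mem_heights_map.1 hy
    exact ⟨a + (k • u + y • v), hk, by simp [hfu, hfv]⟩
  have hH : f (q - a) ∈ H := mem_heights_map.2 ⟨x, by rwa [hqa, add_sub_cancel]⟩
  have hHfin : H.Finite := (hfin.image _).subset hsub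
  have hcard : H.ncard ≤ (φ ⁻¹' P).ncard :=
    (Set.ncard_le_ncard hsub (hfin.image _)).trans (Set.ncard_image_le hfin)
  calc |f (q - a)| < 2 * H.ncard := abs_lt_two_mul_ncard hHfin fun j hj =>
        mem_heights_or_sub_mem hP ha (map_add φ a u ▸ hau) hH hj
    _ ≤ 2 * (φ ⁻¹' P).ncard := by gcongr

lemma exists_collinear_or_unimodular_triangle (e : Module.Basis (Fin 2) ℤ M) (hP : Convex 𝕜 P)
    {a : M} (ha : φ a ∈ P) :
    ∃ B : Module.Basis (Fin 2) ℤ M,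
      (∀ q, φ q ∈ P → B.repr (q - a) 1 = 0) ∨ ∀ i, φ (a + B i) ∈ P := by
  by_contra! hcon
  obtain ⟨⟨b, hb, hba⟩, -⟩ := hcon e
  obtain ⟨B, g, hg, hgB⟩ := exists_basis_smul_eq e (w := b - a) fun h => hba (by simp [h])
  have hB0 : φ a + φ (B 0) ∈ P :=
    add_mem_of_add_zsmul_mem hP ha hg (by simpa [← map_zsmul, hgB] using hb)
  obtain ⟨⟨c, hc, hca⟩, -⟩ := hcon B
  have hheight : B.repr (c - a) 1 ∈ heights P (φ a) (φ (B 0)) (φ (B 1)) :=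
    mem_heights_map.2 ⟨_, by rwa [repr_smul_add_repr_smul, add_sub_cancel]⟩
  obtain ⟨ε, hεmem, hε⟩ := exists_isUnit_mem_heights hP ha hB0 hheight hca
  obtain ⟨x, hx⟩ := mem_heights_map.1 hεmem
  obtain ⟨B', hB'⟩ := exists_basis_coe_eq B (w := ![B 0, x • B 0 + ε • B 1])
    (by simpa [Module.Basis.det_apply, Matrix.det_fin_two, Module.Basis.toMatrix_apply] using hε)
  obtain ⟨-, i, hi⟩ := hcon B'
  fin_cases i
  · exact hi (by simpa [hB'] using hB0)
  · exact hi (by simpa [hB'] using hx)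

lemma exists_basis_abs_repr_lt (e : Module.Basis (Fin 2) ℤ M) (hP : Convex 𝕜 P)
    (hfin : (φ ⁻¹' P).Finite) {a : M} (ha : φ a ∈ P) :
    ∃ B : Module.Basis (Fin 2) ℤ M, ∀ q, φ q ∈ P → ∀ i,
      |B.repr (q - a) i| < 2 * (φ ⁻¹' P).ncard := by
  obtain ⟨B, hB⟩ := exists_collinear_or_unimodular_triangle e hP ha
  have coord_lt {u : M} {x : ℤ} {q : M} (i : Fin 2) (hu : B.repr u i = 0) (hau : φ (a + u) ∈ P)
      (hq : φ q ∈ P) (hqa : x • u + B.repr (q - a) i • B i = q - a) :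
      |B.repr (q - a) i| < 2 * (φ ⁻¹' P).ncard :=
    abs_coord_lt_two_mul_ncard (B.coord i).toAddMonoidHom hP hfin hu (by simp) ha hau hq hqa
  refine ⟨B, fun q hq => Fin.forall_fin_two.2 ?_⟩
  have hrepr := repr_smul_add_repr_smul B (q - a)
  rcases hB with hline | htri
  · refine ⟨coord_lt (u := 0) (x := 0) 0 (by simp) (by simpa using ha) hq ?_, ?_⟩
    · simpa only [hline q hq, zero_smul, add_zero, zero_add] using hrepr
    · rw [hline q hq, abs_zero]
      exact_mod_cast Nat.mul_pos two_pos ((Set.ncard_pos hfin).2 ⟨a, ha⟩)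
  · exact ⟨coord_lt 0 (by simp) (htri 1) hq ((add_comm _ _).trans hrepr),
      coord_lt 1 (by simp) (htri 0) hq hrepr⟩

lemma exists_unimodular_image_Icc {φ : (Fin 2 → ℤ) →+ E} (hP : Convex 𝕜 P)
    (hfin : (φ ⁻¹' P).Finite) (hne : (φ ⁻¹' P).Nonempty) :
    ∃ (A : Matrix (Fin 2) (Fin 2) ℤ) (b : Fin 2 → ℤ), IsUnit A.det ∧
      φ ⁻¹' P ⊆ (fun z => A.mulVec z + b) ''
        Set.Icc (fun _ => -(2 * (φ ⁻¹' P).ncard : ℤ)) (fun _ => 2 * (φ ⁻¹' P).ncard) := by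
  obtain ⟨a, ha⟩ := hne
  obtain ⟨B, hB⟩ := exists_basis_abs_repr_lt (Pi.basisFun ℤ (Fin 2)) hP hfin ha
  refine ⟨(Pi.basisFun ℤ (Fin 2)).toMatrix B, a, Module.Basis.isUnit_det _ B, fun q hq =>
    ⟨B.repr (q - a), ⟨fun i => (abs_le.1 (hB q hq i).le).1, fun i => (abs_le.1 (hB q hq i).le).2⟩,
      ?_⟩⟩
  calc ((Pi.basisFun ℤ (Fin 2)).toMatrix B).mulVec (B.repr (q - a)) + a
      = (Pi.basisFun ℤ (Fin 2)).repr (q - a) + a := by rw [Module.Basis.toMatrix_mulVec_repr]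
    _ = q := sub_add_cancel q a

end Lattice

/-- The embedding `toR2` as a homomorphism, so that the lattice points of `P` form the preimage
`toR2Hom ⁻¹' P`. -/
def toR2Hom : (Fin 2 → ℤ) →+ (Fin 2 → ℝ) :=
  (Int.castAddHom ℝ).compLeft (Fin 2)

lemma unimodMap_toR2 (A : Matrix (Fin 2) (Fin 2) ℤ) (b q : Fin 2 → ℤ) :
    unimodMap A b (toR2 q) = toR2 (A.mulVec q + b) := by
  ext i
  fin_cases i <;> simp [unimodMap, toR2]

lemma unimodMap_image_convexHull (A : Matrix (Fin 2) (Fin 2) ℤ) (b : Fin 2 → ℤ)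
    (s : Set (Fin 2 → ℝ)) :
    unimodMap A b '' convexHull ℝ s = convexHull ℝ (unimodMap A b '' s) :=
  ((A.map (Int.cast : ℤ → ℝ)).mulVecLin.toAffineMap +
    AffineMap.const ℝ (Fin 2 → ℝ) (toR2 b)).image_convexHull s

/-- For fixed `n`, there are only finitely many convex lattice polytopes in `ℝ²` containing
exactly `n` lattice points, up to affine unimodular equivalence. -/
theorem finitely_many_polytopes_up_to_equiv (n : ℕ) (hn : 0 < n) :
    ∃ 𝒮 : Set (Set (Fin 2 → ℝ)), 𝒮.Finite ∧ (∀ P ∈ 𝒮, IsConvexLatticePolytope P) ∧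
      ∀ P : Set (Fin 2 → ℝ), IsConvexLatticePolytope P →
        {q : Fin 2 → ℤ | toR2 q ∈ P}.ncard = n →
        ∃ P' ∈ 𝒮, ∃ (A : Matrix (Fin 2) (Fin 2) ℤ) (b : Fin 2 → ℤ),
          IsUnit A.det ∧ unimodMap A b '' P' = P := by
  let box : Finset (Fin 2 → ℤ) := Finset.Icc (fun _ => -(2 * n)) (fun _ => 2 * n)
  refine ⟨(fun T : Finset (Fin 2 → ℤ) => convexHull ℝ (toR2 '' (T : Set (Fin 2 → ℤ)))) ''
    {T | T ⊆ box ∧ T.Nonempty}, ?_, ?_, ?_⟩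
  · exact (box.powerset.finite_toSet.subset fun T hT => by simpa using hT.1).image _
  · rintro _ ⟨T, ⟨-, hT⟩, rfl⟩
    exact ⟨T, hT, rfl⟩
  · rintro P ⟨S, hS, rfl⟩ hcard
    set P := convexHull ℝ (toR2 '' (S : Set (Fin 2 → ℤ)))
    change (toR2Hom ⁻¹' P).ncard = n at hcard
    have hSP : (S : Set (Fin 2 → ℤ)) ⊆ toR2Hom ⁻¹' P :=
      Set.image_subset_iff.1 (subset_convexHull ℝ _)
    obtain ⟨A, b, hA, hbox⟩ := exists_unimodular_image_Icc (convex_convexHull ℝ _)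
      (Set.finite_of_ncard_pos (hn.trans_eq hcard.symm)) (hS.to_set.mono hSP)
    rw [hcard] at hbox
    obtain ⟨T, hT, rfl⟩ := Finset.subset_set_image_iff.1 (hSP.trans hbox)
    refine ⟨_, ⟨T, ⟨by simpa [box, ← Finset.coe_subset] using hT, hS.of_image⟩, rfl⟩, A, b, hA, ?_⟩
    simp only [P, unimodMap_image_convexHull, Set.image_image, unimodMap_toR2, Finset.coe_image]
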